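/- The series ∑_{n=0}^∞ ((1)_n^2 / ((7/6)_n (11/6)_n)) · ((22n+21)/(2n+1)) · (16/27)^n converges and equals 30·G, where G is Catalan's constant. -/

import Mathlib

noncomputable def poch (x : ℝ) (n : ℕ) : ℝ := ∏ i ∈ Finset.range n, (x + i)

/-- Catalan's constant. -/
noncomputable def catalanG : ℝ := ∑' k : ℕ, (-1 : ℝ) ^ k / (2 * (k : ℝ) + 1) ^ 2

/-!
If `F (n + 1) k - F n k = G n (k + 1) - G n k`, then summing over a rectangle and letting both
sides grow equates the row sum `∑ₖ F 0 k` with the column sum `∑ₙ G n 0`, as soon as `F` and `G`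
vanish suitably on the far sides. Two such Wilf–Zeilberger pairs are used. The first one turns
`2 ∑ (-1)ᵏ / (x + k)²` into `∑ B(x, n + 1) / (x + n)`, with `B` Euler's beta function, and the
second one accelerates the latter series to the geometric rate `16 / 27`. At `x = 1 / 2` the sum is
`8 G`, and the duplication and triplication formulas for Pochhammer symbols bring the terms to the
stated form.
-/

open Filter Topology
open scoped Nat

section WZPair

/-- `F` and `G` form a Wilf–Zeilberger pair: the `n`-difference of `F` is the `k`-difference of
`G`. -/
def IsWZPair {E : Type*} [AddCommGroup E] (F G : ℕ → ℕ → E) : Prop :=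
  ∀ n k, F (n + 1) k - F n k = G n (k + 1) - G n k

theorem IsWZPair.sum_range_add_sum_range {E : Type*} [AddCommGroup E] {F G : ℕ → ℕ → E}
    (h : IsWZPair F G) (N K : ℕ) :
    ∑ n ∈ Finset.range N, G n 0 + ∑ k ∈ Finset.range K, F N k =
      ∑ k ∈ Finset.range K, F 0 k + ∑ n ∈ Finset.range N, G n K := by
  have hdiff : ∑ k ∈ Finset.range K, (F N k - F 0 k) =
      ∑ n ∈ Finset.range N, (G n K - G n 0) := by
    calc ∑ k ∈ Finset.range K, (F N k - F 0 k)
        = ∑ k ∈ Finset.range K, ∑ n ∈ Finset.range N, (F (n + 1) k - F n k) := by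
          exact Finset.sum_congr rfl fun k _ => (Finset.sum_range_sub (F · k) N).symm
      _ = ∑ n ∈ Finset.range N, ∑ k ∈ Finset.range K, (G n (k + 1) - G n k) := by
          rw [Finset.sum_comm]
          simp only [h _ _]
      _ = ∑ n ∈ Finset.range N, (G n K - G n 0) := by
          simp only [Finset.sum_range_sub]
  rw [Finset.sum_sub_distrib, Finset.sum_sub_distrib, sub_eq_sub_iff_add_eq_add] at hdiff
  rw [add_comm, hdiff, add_comm]

theorem IsWZPair.tendsto_sum_range {E : Type*} [NormedAddCommGroup E] {F G : ℕ → ℕ → E}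
    (h : IsWZPair F G) {L : E} {a b : ℕ → ℝ}
    (hG : ∀ n, Tendsto (G n) atTop (𝓝 0))
    (hF₀ : Tendsto (fun K => ∑ k ∈ Finset.range K, F 0 k) atTop (𝓝 L))
    (hF : ∀ᶠ N in atTop, ∀ k, ‖F N k‖ ≤ a N * b k)
    (ha : Tendsto a atTop (𝓝 0)) (hb : Summable b) :
    Tendsto (fun N => ∑ n ∈ Finset.range N, G n 0) atTop (𝓝 L) := by
  have herror : Tendsto (fun N => a N * ∑' k, b k) atTop (𝓝 0) := by
    simpa only [zero_mul] using ha.mul_const (∑' k, b k)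
  rw [tendsto_iff_norm_sub_tendsto_zero]
  refine squeeze_zero' (.of_forall fun _ => norm_nonneg _) ?_ herror
  filter_upwards [hF] with N hN
  have hpartial (K : ℕ) : ‖∑ k ∈ Finset.range K, F N k‖ ≤ a N * ∑' k, b k :=
    calc ‖∑ k ∈ Finset.range K, F N k‖
        ≤ ∑ k ∈ Finset.range K, a N * b k := norm_sum_le_of_le _ fun k _ => hN k
      _ ≤ ∑' k, a N * b k :=
          (hb.mul_left _).sum_le_tsum _ fun k _ => (norm_nonneg _).trans (hN k)
      _ = a N * ∑' k, b k := tsum_mul_left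
  have hlim : Tendsto (fun K => ∑ k ∈ Finset.range K, F N k) atTop
      (𝓝 (L - ∑ n ∈ Finset.range N, G n 0)) := by
    have hGN : Tendsto (fun K => ∑ n ∈ Finset.range N, G n K) atTop (𝓝 0) := by
      simpa only [Finset.sum_const_zero] using tendsto_finsetSum (Finset.range N) fun n _ => hG n
    have hright := (hF₀.add hGN).sub_const (∑ n ∈ Finset.range N, G n 0)
    rw [add_zero] at hright
    exact hright.congr fun K => by rw [← h.sum_range_add_sum_range, add_sub_cancel_left]
  rw [norm_sub_rev]
  exact le_of_tendsto hlim.norm (.of_forall hpartial)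

end WZPair

section Pochhammer

theorem poch_succ (x : ℝ) (n : ℕ) : poch x (n + 1) = poch x n * (x + n) :=
  Finset.prod_range_succ _ _

theorem poch_succ_left (x : ℝ) (n : ℕ) : poch x (n + 1) = x * poch (x + 1) n := by
  simp only [poch, Finset.prod_range_succ', Nat.cast_add, Nat.cast_one, Nat.cast_zero, add_zero,
    mul_comm x, add_assoc, add_comm (1 : ℝ)]

theorem poch_add (x : ℝ) (m n : ℕ) : poch x (m + n) = poch x m * poch (x + m) n := by
  simp only [poch, Finset.prod_range_add, Nat.cast_add, add_assoc]

theorem poch_three (x : ℝ) : poch x 3 = x * (x + 1) * (x + 2) := by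
  simp [poch, Finset.prod_range_succ]

theorem poch_one (n : ℕ) : poch 1 n = n ! := by
  simp only [poch, ← Finset.prod_range_add_one_eq_factorial, Nat.cast_prod, Nat.cast_add,
    Nat.cast_one, add_comm]

theorem poch_ne_zero {x : ℝ} {n : ℕ} (h : ∀ i < n, x + i ≠ 0) : poch x n ≠ 0 :=
  Finset.prod_ne_zero_iff.mpr fun i hi => h i (Finset.mem_range.mp hi)

theorem poch_pos {x : ℝ} (hx : 0 < x) (n : ℕ) : 0 < poch x n :=
  Finset.prod_pos fun i _ => by positivity

theorem poch_le_poch {x y : ℝ} (hx : 0 ≤ x) (hxy : x ≤ y) (n : ℕ) : poch x n ≤ poch y n :=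
  Finset.prod_le_prod (fun i _ => by positivity) fun i _ => by gcongr

theorem poch_sub_natCast_self (x : ℝ) (n : ℕ) : poch (x - n) n = (-1) ^ n * poch (1 - x) n := by
  induction n with
  | zero => simp [poch]
  | succ n ih =>
    have hshift : x - ((n + 1 : ℕ) : ℝ) + 1 = x - n := by push_cast; ring
    rw [poch_succ_left, hshift, ih, poch_succ]
    push_cast
    ring

theorem poch_two_mul (x : ℝ) (n : ℕ) :
    poch (2 * x) (2 * n) = 4 ^ n * poch x n * poch (x + 1 / 2) n := by
  induction n with
  | zero => simp [poch]
  | succ n ih =>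
    rw [mul_add_one, poch_succ, poch_succ, poch_succ, poch_succ, ih]
    push_cast
    ring

theorem poch_three_mul (x : ℝ) (n : ℕ) :
    poch (3 * x) (3 * n) = 27 ^ n * poch x n * poch (x + 1 / 3) n * poch (x + 2 / 3) n := by
  induction n with
  | zero => simp [poch]
  | succ n ih =>
    rw [mul_add_one, poch_succ, poch_succ, poch_succ, poch_succ, poch_succ, poch_succ, ih]
    push_cast
    ring

end Pochhammer

section BetaNat

variable {x : ℝ}

/-- The value `B(x, n + 1)` of Euler's beta function, as a quotient of a factorial by a Pochhammer
symbol. -/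
noncomputable def betaNat (x : ℝ) (n : ℕ) : ℝ := n ! / poch x (n + 1)

theorem betaNat_pos (hx : 0 < x) (n : ℕ) : 0 < betaNat x n :=
  div_pos (by positivity) (poch_pos hx _)

theorem betaNat_zero (x : ℝ) : betaNat x 0 = 1 / x := by
  simp [betaNat, poch]

theorem betaNat_succ (x : ℝ) (n : ℕ) :
    betaNat x (n + 1) = betaNat x n * ((n + 1) / (x + n + 1)) := by
  rw [betaNat, betaNat, poch_succ x (n + 1), Nat.factorial_succ]
  push_cast
  rw [div_mul_div_comm, mul_comm (n ! : ℝ), ← add_assoc]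

theorem betaNat_add_one (hx : 0 < x) (n : ℕ) :
    betaNat (x + 1) n = betaNat x n * (x / (x + n + 1)) := by
  have hleft := poch_succ_left x (n + 1)
  rw [poch_succ x (n + 1)] at hleft
  push_cast at hleft
  have hpos := poch_pos hx (n + 1)
  have hpos' := poch_pos (by positivity : 0 < x + 1) (n + 1)
  rw [betaNat, betaNat, div_mul_div_comm, div_eq_div_iff (by positivity) (by positivity)]
  linear_combination (n ! : ℝ) * hleft

theorem mul_betaNat_le_mul_betaNat {y : ℝ} (hx : 0 < x) (hxy : x ≤ y) (n : ℕ) :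
    y * betaNat y n ≤ x * betaNat x n := by
  have mul_betaNat {z : ℝ} (hz : 0 < z) : z * betaNat z n = n ! / poch (z + 1) n := by
    rw [betaNat, poch_succ_left, ← mul_div_assoc, mul_div_mul_left _ _ hz.ne']
  rw [mul_betaNat hx, mul_betaNat (hx.trans_le hxy)]
  have hpos := poch_pos (by positivity : 0 < x + 1) n
  have hle := poch_le_poch (by positivity : 0 ≤ x + 1) (by gcongr : x + 1 ≤ y + 1) n
  gcongr

theorem tendsto_betaNat_atTop (hx : 0 < x) : Tendsto (betaNat x) atTop (𝓝 0) := by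
  have hpow : Tendsto (fun n : ℕ => (n : ℝ) ^ (-x)) atTop (𝓝 0) :=
    (tendsto_rpow_neg_atTop hx).comp tendsto_natCast_atTop_atTop
  have hprod := (Real.GammaSeq_tendsto_Gamma x).mul hpow
  rw [mul_zero] at hprod
  refine hprod.congr' ?_
  filter_upwards [eventually_gt_atTop 0] with n hn
  have hn' : (0 : ℝ) < n := by exact_mod_cast hn
  have hcancel : (n : ℝ) ^ x * (n : ℝ) ^ (-x) = 1 := by
    rw [← Real.rpow_add hn', add_neg_cancel, Real.rpow_zero]
  rw [Real.GammaSeq, betaNat, poch]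
  linear_combination
    ((n ! : ℝ) / ∏ j ∈ Finset.range (n + 1), (x + (j : ℝ))) * hcancel

end BetaNat

theorem tendsto_inv_add_natCast (c : ℝ) : Tendsto (fun k : ℕ => (c + (k : ℝ))⁻¹) atTop (𝓝 0) :=
  tendsto_inv_atTop_zero.comp (tendsto_atTop_add_const_left _ c tendsto_natCast_atTop_atTop)

theorem summable_inv_add_natCast_sq {x : ℝ} (hx : 0 < x) :
    Summable fun k : ℕ => ((x + k) ^ 2)⁻¹ := by
  refine ((Real.summable_one_div_nat_add_rpow x 2).mpr one_lt_two).congr fun k => ?_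
  rw [abs_of_pos (by positivity), Real.rpow_two, add_comm, one_div]

section AlternatingSeries

variable {x : ℝ}

/-- The member `F` of the WZ pair whose `n = 0` row is `2 (-1)ᵏ / (x + k)²`. -/
noncomputable def altKernel (x : ℝ) (n k : ℕ) : ℝ :=
  (-1) ^ k * betaNat (x + k) n * ((x + k)⁻¹ + (x + k + n)⁻¹)

/-- The member `G` of the WZ pair of `altKernel`. -/
noncomputable def altMate (x : ℝ) (n k : ℕ) : ℝ :=
  (-1) ^ k * betaNat (x + k) n * (x + k + n)⁻¹

theorem isWZPair_altKernel_altMate (hx : 0 < x) : IsWZPair (altKernel x) (altMate x) := by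
  intro n k
  have hy : 0 < x + k := by positivity
  simp only [altKernel, altMate, Nat.cast_succ, ← add_assoc, betaNat_succ, betaNat_add_one hy,
    pow_succ]
  field_simp
  ring

theorem betaNat_add_natCast_mul_inv_le (hx : 0 < x) (n k : ℕ) :
    betaNat (x + k) n * (x + k)⁻¹ ≤ x * betaNat x n * ((x + k) ^ 2)⁻¹ := by
  calc betaNat (x + k) n * (x + k)⁻¹
      = (x + k) * betaNat (x + k) n * ((x + k) ^ 2)⁻¹ := by field_simp
    _ ≤ x * betaNat x n * ((x + k) ^ 2)⁻¹ := by
        gcongr ?_ * _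
        exact mul_betaNat_le_mul_betaNat hx (by simp) n

theorem norm_altMate_le (hx : 0 < x) (n k : ℕ) :
    ‖altMate x n k‖ ≤ x * betaNat x n * ((x + k) ^ 2)⁻¹ := by
  have hy : 0 < x + k := by positivity
  have hbeta := betaNat_pos hy n
  have hinv : (x + k + n)⁻¹ ≤ (x + k)⁻¹ := inv_anti₀ hy (le_add_of_nonneg_right n.cast_nonneg)
  calc ‖altMate x n k‖ = betaNat (x + k) n * (x + k + n)⁻¹ := by
        rw [altMate, norm_mul, norm_mul, norm_pow, norm_neg, norm_one, one_pow, one_mul,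
          Real.norm_of_nonneg hbeta.le, Real.norm_of_nonneg (by positivity)]
    _ ≤ betaNat (x + k) n * (x + k)⁻¹ := by gcongr
    _ ≤ x * betaNat x n * ((x + k) ^ 2)⁻¹ := betaNat_add_natCast_mul_inv_le hx n k

theorem norm_altKernel_le (hx : 0 < x) (n k : ℕ) :
    ‖altKernel x n k‖ ≤ 2 * x * betaNat x n * ((x + k) ^ 2)⁻¹ := by
  have hy : 0 < x + k := by positivity
  have hbeta := betaNat_pos hy n
  have hinv : (x + k + n)⁻¹ ≤ (x + k)⁻¹ := inv_anti₀ hy (le_add_of_nonneg_right n.cast_nonneg)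
  calc ‖altKernel x n k‖ = betaNat (x + k) n * ((x + k)⁻¹ + (x + k + n)⁻¹) := by
        rw [altKernel, norm_mul, norm_mul, norm_pow, norm_neg, norm_one, one_pow, one_mul,
          Real.norm_of_nonneg hbeta.le, Real.norm_of_nonneg (by positivity)]
    _ ≤ betaNat (x + k) n * ((x + k)⁻¹ + (x + k)⁻¹) := by gcongr
    _ = 2 * (betaNat (x + k) n * (x + k)⁻¹) := by ring
    _ ≤ 2 * (x * betaNat x n * ((x + k) ^ 2)⁻¹) := by
        gcongr 2 * ?_
        exact betaNat_add_natCast_mul_inv_le hx n k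
    _ = 2 * x * betaNat x n * ((x + k) ^ 2)⁻¹ := by ring

theorem hasSum_altKernel_zero (hx : 0 < x) :
    HasSum (altKernel x 0) (2 * ∑' k : ℕ, (-1) ^ k / (x + k) ^ 2) := by
  have hsummable : Summable fun k : ℕ => (-1) ^ k / (x + k) ^ 2 :=
    .of_norm_bounded (summable_inv_add_natCast_sq hx) fun k => by simp
  refine (hsummable.hasSum.mul_left 2).congr_fun fun k => ?_
  rw [altKernel, betaNat_zero]
  field_simp
  rw [Nat.cast_zero, add_zero]
  ring

theorem tendsto_sum_betaNat_div (hx : 0 < x) :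
    Tendsto (fun N => ∑ n ∈ Finset.range N, betaNat x n / (x + n)) atTop
      (𝓝 (2 * ∑' k : ℕ, (-1) ^ k / (x + k) ^ 2)) := by
  have hmate (n : ℕ) : Tendsto (altMate x n) atTop (𝓝 0) := by
    refine squeeze_zero_norm (norm_altMate_le hx n) ?_
    simpa only [mul_zero] using
      (summable_inv_add_natCast_sq hx).tendsto_atTop_zero.const_mul (x * betaNat x n)
  have hbeta : Tendsto (fun N => 2 * x * betaNat x N) atTop (𝓝 0) := by
    simpa only [mul_zero] using (tendsto_betaNat_atTop hx).const_mul (2 * x)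
  refine ((isWZPair_altKernel_altMate hx).tendsto_sum_range hmate
    (hasSum_altKernel_zero hx).tendsto_sum_nat (.of_forall (norm_altKernel_le hx)) hbeta
    (summable_inv_add_natCast_sq hx)).congr fun N => Finset.sum_congr rfl fun n _ => ?_
  simp [altMate, div_eq_mul_inv]

end AlternatingSeries

section AcceleratedSeries

variable {x : ℝ}

/-- The member `F` of the WZ pair that accelerates `∑ betaNat x k / (x + k)`, its `n = 0` row. -/
noncomputable def accelKernel (x : ℝ) (n k : ℕ) : ℝ :=
  (-1) ^ n * poch x n ^ 2 * (2 * n)! ^ 2 / poch x (3 * n) *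
    (k ! / (poch x (k + n + 1) * poch (x + k - n) (2 * n + 1)))

/-- The rational certificate `G / F` of the WZ pair of `accelKernel`, as a function of
`y = x + k`. With the ansatz `c / (y - n - 1) + a * y + b` the WZ equation is a linear system for
`a`, `b` and `c`, and this is its solution. -/
noncomputable def accelCertificate (x n y : ℝ) : ℝ :=
  ((n + x) ^ 2 * (2 * n + 1) ^ 2 / (y - n - 1) +
      (3 * n + x + 2) * ((3 * n + x + 1) * y + (5 * n ^ 2 + (3 * x + 2) * n + x))) /
    poch (x + 3 * n) 3

/-- The member `G` of the WZ pair of `accelKernel`. -/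
noncomputable def accelMate (x : ℝ) (n k : ℕ) : ℝ :=
  accelKernel x n k * accelCertificate x n (x + k)

theorem add_natCast_sub_natCast_ne_zero (hx : ∀ m : ℤ, x ≠ m) (k n : ℕ) : x + k - n ≠ 0 := by
  intro h
  apply hx (n - k)
  push_cast
  linarith

theorem one_sub_add_natCast_ne_zero (hx : ∀ m : ℤ, x ≠ m) (n : ℕ) : 1 - x + n ≠ 0 := by
  intro h
  apply hx (1 + n)
  push_cast
  linarith

theorem poch_add_sub_ne_zero (hx : ∀ m : ℤ, x ≠ m) (k n j : ℕ) : poch (x + k - n) j ≠ 0 := by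
  refine poch_ne_zero fun i _ => ?_
  have hne := add_natCast_sub_natCast_ne_zero hx (k + i) n
  push_cast at hne
  convert hne using 1
  ring

theorem accelKernel_zero_left (x : ℝ) (k : ℕ) : accelKernel x 0 k = betaNat x k / (x + k) := by
  simp [accelKernel, betaNat, poch, div_div]

theorem accelKernel_succ_right (hx₀ : 0 < x) (hx : ∀ m : ℤ, x ≠ m) (n k : ℕ) :
    accelKernel x n (k + 1) =
      accelKernel x n k * ((k + 1) * (x + k - n) / (x + k + n + 1) ^ 2) := by
  have hshift : poch (x + k - n) (2 * n + 1) * (x + k + n + 1) =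
      (x + k - n) * poch (x + (k + 1 : ℕ) - n) (2 * n + 1) := by
    have h := poch_succ_left (x + k - n) (2 * n + 1)
    rw [poch_succ] at h
    push_cast at h ⊢
    convert h using 2 <;> ring_nf
  have hpoch := poch_add_sub_ne_zero hx k n (2 * n + 1)
  have hpoch' := poch_add_sub_ne_zero hx (k + 1) n (2 * n + 1)
  have hx_pos := poch_pos hx₀ (k + n + 1)
  rw [accelKernel, accelKernel, Nat.factorial_succ, show k + 1 + n + 1 = k + n + 1 + 1 by ring,
    poch_succ x (k + n + 1), mul_assoc (_ / _)]
  congr 1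
  push_cast at hpoch' hshift ⊢
  rw [div_mul_div_comm, div_eq_div_iff (by positivity) (by positivity)]
  linear_combination
    (k + 1) * k ! * poch x (k + n + 1) * (x + k + n + 1) * hshift

theorem accelKernel_succ_left (x : ℝ) (n k : ℕ) :
    accelKernel x (n + 1) k = accelKernel x n k *
      (-((n + x) ^ 2 * ((2 * n + 1) * (2 * n + 2)) ^ 2 / poch (x + 3 * n) 3) /
        ((x + k + n + 1) ^ 2 * (x + k - n - 1))) := by
  have hshift : poch (x + k - (n + 1 : ℕ)) (2 * (n + 1) + 1) =
      (x + k - n - 1) * (poch (x + k - n) (2 * n + 1) * (x + k + n + 1)) := by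
    rw [show 2 * (n + 1) + 1 = 2 * n + 1 + 1 + 1 by ring, poch_succ_left,
      show x + k - (n + 1 : ℕ) + 1 = x + k - n by push_cast; ring, poch_succ]
    push_cast
    ring
  have hfact : ((2 * (n + 1))! : ℝ) = (2 * n + 2) * ((2 * n + 1) * (2 * n)!) := by
    rw [mul_add_one, Nat.factorial_succ, Nat.factorial_succ]
    push_cast
    ring
  have hx_poch : poch x (3 * (n + 1)) = poch x (3 * n) * poch (x + 3 * n) 3 := by
    rw [mul_add_one, poch_add]
    push_cast
    rfl
  rw [accelKernel, accelKernel, hshift, hfact, hx_poch, ← add_assoc k n 1,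
    poch_succ x (k + n + 1), poch_succ x n, pow_succ (-1 : ℝ)]
  push_cast
  field_simp
  ring

theorem accelCertificate_recurrence {x n y : ℝ} (hpoch : poch (x + 3 * n) 3 ≠ 0)
    (hadd : y + n + 1 ≠ 0) (hsub : y - n ≠ 0) (hsub' : y - n - 1 ≠ 0) :
    -((n + x) ^ 2 * ((2 * n + 1) * (2 * n + 2)) ^ 2 / poch (x + 3 * n) 3) /
        ((y + n + 1) ^ 2 * (y - n - 1)) - 1 =
      (y - x + 1) * (y - n) / (y + n + 1) ^ 2 * accelCertificate x n (y + 1) -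
        accelCertificate x n y := by
  rw [accelCertificate, accelCertificate, show y + 1 - n - 1 = y - n by ring]
  generalize hp : poch (x + 3 * n) 3 = p at hpoch ⊢
  field_simp
  rw [← hp, poch_three]
  ring

theorem isWZPair_accelKernel_accelMate (hx₀ : 0 < x) (hx : ∀ m : ℤ, x ≠ m) :
    IsWZPair (accelKernel x) (accelMate x) := by
  intro n k
  have hsub' := add_natCast_sub_natCast_ne_zero hx k (n + 1)
  push_cast at hsub'
  rw [← sub_sub] at hsub'
  have hrec := accelCertificate_recurrence (x := x) (n := n) (y := x + k)
    (poch_pos (by positivity) 3).ne' (by positivity)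
    (add_natCast_sub_natCast_ne_zero hx k n) hsub'
  rw [accelMate, accelMate, accelKernel_succ_left x, accelKernel_succ_right hx₀ hx]
  rw [show x + k - x + 1 = (k : ℝ) + 1 by ring] at hrec
  push_cast
  rw [← add_assoc x]
  linear_combination accelKernel x n k * hrec

theorem tendsto_add_mul_accelKernel (hx₀ : 0 < x) (n : ℕ) :
    Tendsto (fun k : ℕ => (x + k) * accelKernel x n k) atTop (𝓝 0) := by
  induction n with
  | zero =>
    refine (tendsto_betaNat_atTop hx₀).congr fun k => ?_
    rw [accelKernel_zero_left, mul_div_cancel₀]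
    positivity
  | succ n ih =>
    have hfactor := ((tendsto_inv_add_natCast (x + n + 1)).pow 2).mul
      (tendsto_inv_add_natCast (x - n - 1))
    have hprod := ih.mul (hfactor.const_mul
      (-((n + x) ^ 2 * ((2 * n + 1) * (2 * n + 2)) ^ 2 / poch (x + 3 * n) 3)))
    rw [zero_mul] at hprod
    refine hprod.congr fun k => ?_
    rw [accelKernel_succ_left x, show x + n + 1 + k = x + k + n + 1 by ring,
      show x - n - 1 + k = x + k - n - 1 by ring, div_eq_mul_inv (-_) (_ * _), mul_inv, inv_pow]
    ring

theorem tendsto_accelCertificate_div (x : ℝ) (n : ℕ) :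
    Tendsto (fun k : ℕ => accelCertificate x n (x + k) * (x + k)⁻¹) atTop
      (𝓝 ((3 * n + x + 2) * (3 * n + x + 1) / poch (x + 3 * n) 3)) := by
  have hy := tendsto_inv_add_natCast x
  have hpole := ((tendsto_inv_add_natCast (x - n - 1)).mul hy).const_mul
    ((n + x) ^ 2 * (2 * n + 1) ^ 2)
  have hconst := ((hy.const_mul (5 * n ^ 2 + (3 * x + 2) * n + x)).const_add
    (3 * n + x + 1)).const_mul (3 * n + x + 2)
  have hsum := (hpole.add hconst).div_const (poch (x + 3 * n) 3)
  rw [mul_zero, mul_zero, mul_zero, zero_add, add_zero] at hsum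
  refine hsum.congr' ?_
  filter_upwards [(tendsto_atTop_add_const_left _ x
    tendsto_natCast_atTop_atTop).eventually_ne_atTop 0] with k hk
  rw [accelCertificate, show x - n - 1 + k = x + k - n - 1 by ring]
  field_simp

theorem tendsto_accelMate (hx₀ : 0 < x) (n : ℕ) :
    Tendsto (accelMate x n) atTop (𝓝 0) := by
  have hprod := (tendsto_add_mul_accelKernel hx₀ n).mul (tendsto_accelCertificate_div x n)
  rw [zero_mul] at hprod
  refine hprod.congr fun k => ?_
  rw [accelMate]
  field_simp

theorem norm_accelKernel_le (hx₀ : 0 < x) (hx : ∀ m : ℤ, x ≠ m) {n : ℕ} (hn : 3 ≤ n) (k : ℕ) :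
    ‖accelKernel x n k‖ ≤ ‖accelKernel x n 0‖ * (((1 : ℝ) + k) ^ 2)⁻¹ := by
  have hn' : (3 : ℝ) ≤ n := by exact_mod_cast hn
  induction k with
  | zero => simp
  | succ k ih =>
    have hden : (k : ℝ) + 4 ≤ x + k + n + 1 := by linarith
    have hnum : |x + k - n| ≤ x + k + n + 1 := by
      rw [abs_le]
      constructor <;> linarith [k.cast_nonneg (α := ℝ)]
    have hratio : ‖(k + 1) * (x + k - n) / (x + k + n + 1) ^ 2‖ ≤
        (1 + k : ℝ) ^ 2 * ((2 + k : ℝ) ^ 2)⁻¹ := by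
      rw [norm_div, norm_mul, norm_pow, Real.norm_of_nonneg (by positivity : (0 : ℝ) ≤ k + 1),
        Real.norm_of_nonneg (by positivity : 0 ≤ x + k + n + 1), Real.norm_eq_abs]
      calc (k + 1) * |x + k - n| / (x + k + n + 1) ^ 2
          ≤ (k + 1) * (x + k + n + 1) / (x + k + n + 1) ^ 2 := by gcongr
        _ = (k + 1) / (x + k + n + 1) := by field_simp
        _ ≤ (k + 1) / (k + 4) := by gcongr
        _ ≤ (1 + k : ℝ) ^ 2 * ((2 + k : ℝ) ^ 2)⁻¹ := by
          rw [← div_eq_mul_inv, div_le_div_iff₀ (by positivity) (by positivity)]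
          nlinarith [k.cast_nonneg (α := ℝ)]
    rw [accelKernel_succ_right hx₀ hx, norm_mul]
    calc ‖accelKernel x n k‖ * ‖(k + 1) * (x + k - n) / (x + k + n + 1) ^ 2‖
        ≤ ‖accelKernel x n 0‖ * ((1 + k : ℝ) ^ 2)⁻¹ *
            ((1 + k : ℝ) ^ 2 * ((2 + k : ℝ) ^ 2)⁻¹) := by gcongr
      _ = ‖accelKernel x n 0‖ * ((1 + (k + 1 : ℕ) : ℝ) ^ 2)⁻¹ := by
          rw [mul_assoc, inv_mul_cancel_left₀ (by positivity)]
          push_cast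
          ring

theorem accelKernel_ne_zero (hx₀ : 0 < x) (hx : ∀ m : ℤ, x ≠ m) (n k : ℕ) :
    accelKernel x n k ≠ 0 := by
  have hpoch := poch_add_sub_ne_zero hx k n (2 * n + 1)
  have hpos_n := poch_pos hx₀ n
  have hpos_three := poch_pos hx₀ (3 * n)
  have hpos_add := poch_pos hx₀ (k + n + 1)
  rw [accelKernel]
  positivity

theorem accelKernel_succ_zero (x : ℝ) (n : ℕ) :
    accelKernel x (n + 1) 0 = accelKernel x n 0 *
      (((x + 1 * n) / (x + 1 + 1 * n)) ^ 2 * ((1 + 2 * n) / (x + 3 * n)) *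
        ((1 + 2 * n) / (x + 1 + 3 * n)) * ((2 + 2 * n) / (x + 2 + 3 * n)) *
        ((2 + 2 * n) / (1 - x + 1 * n))) := by
  rw [accelKernel_succ_left x, poch_three, Nat.cast_zero,
    show x + 0 - n - 1 = -(1 - x + n) by ring]
  field_simp
  ring

theorem tendsto_norm_accelKernel_ratio (hx₀ : 0 < x) (hx : ∀ m : ℤ, x ≠ m) :
    Tendsto (fun n => ‖accelKernel x (n + 1) 0‖ / ‖accelKernel x n 0‖) atTop (𝓝 (16 / 27)) := by
  have hlin (a b c d : ℝ) (hd : d ≠ 0) := tendsto_add_mul_div_add_mul_atTop_nhds a b c hd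
  have hlim := ((((((hlin x (x + 1) 1 1 one_ne_zero).pow 2).mul
    (hlin 1 x 2 3 three_ne_zero)).mul (hlin 1 (x + 1) 2 3 three_ne_zero)).mul
    (hlin 2 (x + 2) 2 3 three_ne_zero)).mul (hlin 2 (1 - x) 2 1 one_ne_zero)).norm
  have hval : ‖(1 / 1 : ℝ) ^ 2 * (2 / 3) * (2 / 3) * (2 / 3) * (2 / 1)‖ = 16 / 27 := by norm_num
  rw [hval] at hlim
  refine hlim.congr fun n => ?_
  rw [accelKernel_succ_zero x, norm_mul (accelKernel x n 0),
    mul_div_cancel_left₀ _ (norm_ne_zero_iff.mpr (accelKernel_ne_zero hx₀ hx n 0))]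

theorem summable_accelKernel_zero_right (hx₀ : 0 < x) (hx : ∀ m : ℤ, x ≠ m) :
    Summable fun n => accelKernel x n 0 :=
  summable_of_ratio_test_tendsto_lt_one (by norm_num)
    (.of_forall fun n => accelKernel_ne_zero hx₀ hx n 0) (tendsto_norm_accelKernel_ratio hx₀ hx)

theorem accelCertificate_self {n : ℝ} (hx₀ : 0 < x) (hn : 0 ≤ n) (hne : 1 - x + n ≠ 0) :
    accelCertificate x n x =
      (x + 1 * n) / (x + 3 * n) * ((x + 2 + 5 * n) / (x + 1 + 3 * n)) -
        (x + 1 * n) / (x + 3 * n) * ((x + 1 * n) / (x + 1 + 3 * n)) *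
          ((1 + 2 * n) / (x + 2 + 3 * n)) * ((1 + 2 * n) / (1 - x + 1 * n)) := by
  rw [accelCertificate, poch_three, show x - n - 1 = -(1 - x + n) by ring]
  field_simp
  ring

theorem tendsto_accelCertificate_self (hx₀ : 0 < x) (hx : ∀ m : ℤ, x ≠ m) :
    Tendsto (fun n : ℕ => accelCertificate x n x) atTop (𝓝 (11 / 27)) := by
  have hlin (a b c d : ℝ) (hd : d ≠ 0) := tendsto_add_mul_div_add_mul_atTop_nhds a b c hd
  have h₁ := hlin x x 1 3 three_ne_zero
  have hlim := (h₁.mul (hlin (x + 2) (x + 1) 5 3 three_ne_zero)).sub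
    (((h₁.mul (hlin x (x + 1) 1 3 three_ne_zero)).mul
      (hlin 1 (x + 2) 2 3 three_ne_zero)).mul (hlin 1 (1 - x) 2 1 one_ne_zero))
  have hval : (1 / 3 : ℝ) * (5 / 3) - 1 / 3 * (1 / 3) * (2 / 3) * (2 / 1) = 11 / 27 := by norm_num
  rw [hval] at hlim
  exact hlim.congr fun n =>
    (accelCertificate_self hx₀ n.cast_nonneg (one_sub_add_natCast_ne_zero hx n)).symm

theorem summable_accelMate_zero (hx₀ : 0 < x) (hx : ∀ m : ℤ, x ≠ m) :
    Summable fun n => accelMate x n 0 := by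
  have hcert := tendsto_accelCertificate_self hx₀ hx
  rw [← Nat.cofinite_eq_atTop] at hcert
  simpa only [accelMate, Nat.cast_zero, add_zero] using
    (summable_accelKernel_zero_right hx₀ hx).norm.mul_tendsto_const hcert

theorem hasSum_accelMate_zero (hx₀ : 0 < x) (hx : ∀ m : ℤ, x ≠ m) :
    HasSum (fun n => accelMate x n 0) (2 * ∑' k : ℕ, (-1) ^ k / (x + k) ^ 2) := by
  have hrow : Tendsto (fun K => ∑ k ∈ Finset.range K, accelKernel x 0 k) atTop
      (𝓝 (2 * ∑' k : ℕ, (-1) ^ k / (x + k) ^ 2)) := by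
    simpa only [accelKernel_zero_left] using tendsto_sum_betaNat_div hx₀
  have hcolumn : Tendsto (fun n => ‖accelKernel x n 0‖) atTop (𝓝 0) :=
    tendsto_zero_iff_norm_tendsto_zero.mp
      (summable_accelKernel_zero_right hx₀ hx).tendsto_atTop_zero
  rw [(summable_accelMate_zero hx₀ hx).hasSum_iff_tendsto_nat]
  refine (isWZPair_accelKernel_accelMate hx₀ hx).tendsto_sum_range (tendsto_accelMate hx₀) hrow
    ?_ hcolumn (summable_inv_add_natCast_sq one_pos)
  filter_upwards [eventually_ge_atTop 3] with n hn
  exact norm_accelKernel_le hx₀ hx hn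

theorem accelKernel_zero_right (hx₀ : 0 < x) (n : ℕ) :
    accelKernel x n 0 = (2 * n)! ^ 2 / (poch x (3 * n) * (x + n) ^ 2 * poch (1 - x) n) := by
  have hsplit : poch (x - n) (2 * n + 1) = (-1) ^ n * poch (1 - x) n * poch x (n + 1) := by
    rw [two_mul, add_assoc, poch_add, poch_sub_natCast_self, sub_add_cancel]
  have hpos := poch_pos hx₀ n
  rw [accelKernel, Nat.cast_zero, add_zero, zero_add, hsplit, poch_succ, Nat.factorial_zero]
  field_simp
  simp

theorem accelMate_zero_right (hx₀ : 0 < x) (hx : ∀ m : ℤ, x ≠ m) (n : ℕ) :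
    accelMate x n 0 =
      (2 * n)! ^ 2 * ((n + 1 - x) * (3 * n + x + 2) * (5 * n + x + 2) - (n + x) * (2 * n + 1) ^ 2) /
        (poch x (3 * n + 3) * (x + n) * poch (1 - x) (n + 1)) := by
  have hne := one_sub_add_natCast_ne_zero hx n
  rw [accelMate, accelKernel_zero_right hx₀, accelCertificate, Nat.cast_zero, add_zero,
    show x - n - 1 = -(1 - x + n) by ring, poch_add x, poch_succ (1 - x)]
  push_cast
  field_simp
  ring

end AcceleratedSeries

theorem stmt2_general {x : ℝ} (hx₀ : 0 < x) (hx : ∀ m : ℤ, x ≠ m) :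
    HasSum (fun n : ℕ =>
      (2 * n)! ^ 2 * ((n + 1 - x) * (3 * n + x + 2) * (5 * n + x + 2) - (n + x) * (2 * n + 1) ^ 2) /
        (poch x (3 * n + 3) * (x + n) * poch (1 - x) (n + 1)))
      (2 * ∑' k : ℕ, (-1) ^ k / (x + k) ^ 2) := by
  simpa only [accelMate_zero_right hx₀ hx] using hasSum_accelMate_zero hx₀ hx

section Catalan

theorem half_ne_intCast (m : ℤ) : (1 / 2 : ℝ) ≠ m := by
  intro h
  have htwo : ((2 * m : ℤ) : ℝ) = (1 : ℤ) := by push_cast; linarith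
  have := Int.cast_injective htwo
  omega

theorem thirty_mul_catalanG :
    30 * catalanG = 15 / 4 * (2 * ∑' k : ℕ, (-1) ^ k / ((1 / 2 : ℝ) + k) ^ 2) := by
  rw [catalanG, ← tsum_mul_left, ← tsum_mul_left, ← tsum_mul_left]
  congr! 2 with k
  field_simp
  ring

theorem factorial_two_mul_eq_poch (n : ℕ) : ((2 * n)! : ℝ) = 4 ^ n * poch (1 / 2) n * poch 1 n := by
  convert poch_two_mul (1 / 2) n using 2 <;> norm_num [poch_one]

theorem poch_half_three_mul_add_three (n : ℕ) :
    poch (1 / 2) (3 * n + 3) =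
      27 ^ (n + 1) * (1 / 6 * poch (7 / 6) n) * poch (1 / 2) (n + 1) *
        (5 / 6 * poch (11 / 6) n) := by
  have htriple := poch_three_mul (1 / 6) (n + 1)
  rw [mul_add_one, poch_succ_left (1 / 6), poch_succ_left (1 / 6 + 2 / 3)] at htriple
  convert htriple using 4 <;> norm_num

theorem accelTerm_half (n : ℕ) :
    15 / 4 * (((2 * n)! : ℝ) ^ 2 *
        ((n + 1 - 1 / 2) * (3 * n + 1 / 2 + 2) * (5 * n + 1 / 2 + 2) -
          (n + 1 / 2) * (2 * n + 1) ^ 2) /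
        (poch (1 / 2) (3 * n + 3) * (1 / 2 + n) * poch (1 - 1 / 2) (n + 1))) =
      poch 1 n ^ 2 / (poch (7 / 6) n * poch (11 / 6) n) *
        ((22 * (n : ℝ) + 21) / (2 * n + 1)) * (16 / 27 : ℝ) ^ n := by
  have hpos_half := poch_pos (one_half_pos (α := ℝ)) n
  have hsixteen : (16 : ℝ) ^ n = (4 ^ n) ^ 2 := by rw [← pow_mul, mul_comm, pow_mul]; norm_num
  rw [factorial_two_mul_eq_poch, poch_half_three_mul_add_three, sub_half, poch_succ, div_pow,
    hsixteen]
  field_simp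
  ring

end Catalan

theorem stmt2 :
    HasSum (fun n : ℕ =>
      poch 1 n ^ 2 / (poch (7/6) n * poch (11/6) n) *
        ((22 * (n : ℝ) + 21) / (2 * n + 1)) * (16/27 : ℝ) ^ n)
      (30 * catalanG) := by
  rw [thirty_mul_catalanG]
  exact ((stmt2_general one_half_pos half_ne_intCast).mul_left (15 / 4)).congr_fun fun n =>
    (accelTerm_half n).symm
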